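/- arXiv:1410.7818 — 2 statements merged into one kernel-verified Lean document; each statement's English description precedes it below -/
import Mathlib

section
/- Fix integers p ≥ 1, m with 1 ≤ m ≤ p, and n ≥ 2p−1. The number of 0-convex words of length n on the alphabet [p] whose maximum value is exactly m equals ( Σ_{j=0}^{m−1} a(j) )², where a(j) is the number of integer partitions of j (with a(0) = 1). -/
/-- A word `f : [n] → [p]` (modeled 0-indexed as `f : Fin n → Fin p`; the letter at
position `i` has 1-indexed value `(f i : ℕ) + 1`) is `k`-convex if
`f(i-1) + f(i+1) - 2 f(i) ≤ k` for all interior positions. -/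
def IsKConvex (k : ℕ) {n p : ℕ} (f : Fin n → Fin p) : Prop :=
  ∀ i j l : Fin n, (i : ℕ) + 1 = (j : ℕ) → (j : ℕ) + 1 = (l : ℕ) →
    ((f i : ℕ) : ℤ) + ((f l : ℕ) : ℤ) - 2 * ((f j : ℕ) : ℤ) ≤ (k : ℤ)

/-!
A 0-convex word is a concave sequence, so its deficit `d i = M - f i` below the maximum `M` is
convex and vanishes at a peak `t`. Cutting `d` at `t` leaves two convex sequences, one read from
each end of the word, that are eventually zero. A convex sequence of naturals that is eventually
zero is `i ↦ ∑ x ∈ A, (x - i)⁺` for exactly one multiset `A` of positive integers: the multiplicity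
of `k + 1` in `A` is the second difference at `k`, and `A` is a partition of the value at `0`, which
is at most `M`. A word is thus encoded by a pair of partitions of size at most `M`; conversely, once
the length exceeds `2 * M`, the deficits of any two such partitions do not overlap.
-/

/-- For a partition with parts `A`, the number of cells of its Young diagram beyond column `i`. The
truncated subtraction is deliberate: a part `x` contributes `(x - i)⁺`. -/
def excess (A : Multiset ℕ) (i : ℕ) : ℕ :=
  (A.map (· - i)).sum

section Excess

variable {A B : Multiset ℕ}

theorem excess_zero_left (i : ℕ) : excess 0 i = 0 := by
  simp [excess]

theorem excess_zero_right (A : Multiset ℕ) : excess A 0 = A.sum := by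
  simp [excess]

theorem excess_cons (a : ℕ) (A : Multiset ℕ) (i : ℕ) :
    excess (a ::ₘ A) i = (a - i) + excess A i := by
  simp [excess]

theorem excess_le_sum (A : Multiset ℕ) (i : ℕ) : excess A i ≤ A.sum :=
  Multiset.sum_map_le_sum _ fun _ _ ↦ Nat.sub_le _ _

theorem excess_eq_zero_of_sum_le {i : ℕ} (h : A.sum ≤ i) : excess A i = 0 :=
  Multiset.sum_eq_zero <| Multiset.forall_mem_map_iff.2 fun _ hx ↦
    Nat.sub_eq_zero_of_le <| (Multiset.le_sum_of_mem hx).trans h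

theorem count_succ_add_two_mul_excess (A : Multiset ℕ) (k : ℕ) :
    A.count (k + 1) + 2 * excess A (k + 1) = excess A k + excess A (k + 2) := by
  induction A using Multiset.induction_on with
  | empty => simp [excess_zero_left]
  | cons a A ih =>
    simp only [excess_cons, Multiset.count_cons]
    split_ifs <;> omega

theorem two_mul_excess_succ_le (A : Multiset ℕ) (k : ℕ) :
    2 * excess A (k + 1) ≤ excess A k + excess A (k + 2) :=
  (Nat.le_add_left _ _).trans_eq (count_succ_add_two_mul_excess A k)

theorem eq_of_excess_eq (hA : 0 ∉ A) (hB : 0 ∉ B) (h : excess A = excess B) : A = B := by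
  ext k
  cases k with
  | zero => rw [Multiset.count_eq_zero_of_notMem hA, Multiset.count_eq_zero_of_notMem hB]
  | succ k =>
    have hcountA := count_succ_add_two_mul_excess A k
    have hcountB := count_succ_add_two_mul_excess B k
    rw [h] at hcountA
    omega

theorem card_add_excess_one (hA : 0 ∉ A) : A.card + excess A 1 = A.sum := by
  induction A using Multiset.induction_on with
  | empty => simp [excess_zero_left]
  | cons a A ih =>
    rw [Multiset.mem_cons, not_or] at hA
    have := ih hA.2
    rw [Multiset.card_cons, excess_cons, Multiset.sum_cons]
    omega

theorem excess_map_succ_add_replicate_one (A : Multiset ℕ) (c i : ℕ) :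
    excess (A.map (· + 1) + Multiset.replicate c 1) (i + 1) = excess A i := by
  simp [excess]

theorem sum_map_succ_add_replicate_one (A : Multiset ℕ) (c : ℕ) :
    (A.map (· + 1) + Multiset.replicate c 1).sum = A.sum + A.card + c := by
  simp [Multiset.sum_map_add]

theorem exists_excess_eq {L : ℕ → ℕ} (hL : ∀ i, 2 * L (i + 1) ≤ L i + L (i + 2)) {N : ℕ}
    (hN : ∀ i, N ≤ i → L i = 0) : ∃ A : Multiset ℕ, 0 ∉ A ∧ excess A = L := by
  induction N generalizing L with
  | zero =>
    exact ⟨0, Multiset.notMem_zero 0, funext fun i ↦ by rw [excess_zero_left, hN i i.zero_le]⟩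
  | succ N ih =>
    obtain ⟨A, hA, hAL⟩ := ih (fun i ↦ hL (i + 1)) fun i hi ↦ hN (i + 1) (Nat.succ_le_succ hi)
    -- Shifting `L` back by one column lengthens every part of `A`; the new parts have size `1`.
    refine ⟨A.map (· + 1) + Multiset.replicate (L 0 + L 2 - 2 * L 1) 1,
      by simp [Multiset.mem_replicate], ?_⟩
    ext (_ | i)
    · have hsum : A.sum = L 1 := by rw [← excess_zero_right, hAL]
      have hone : excess A 1 = L 2 := by rw [hAL]
      have hcard := card_add_excess_one hA
      have hconvex : 2 * L 1 ≤ L 0 + L 2 := hL 0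
      rw [excess_zero_right, sum_map_succ_add_replicate_one]
      omega
    · rw [excess_map_succ_add_replicate_one, hAL]

end Excess

/-- The partitions of all integers up to `M`, as multisets of positive integers. -/
def partitionsLE (M : ℕ) : Set (Multiset ℕ) :=
  {A | 0 ∉ A ∧ A.sum ≤ M}

/-- A partition of an integer up to `M` is a `Nat.Partition` of its own sum. -/
def partitionsLEEquivSigma (M : ℕ) :
    partitionsLE M ≃ Σ j : Fin (M + 1), Nat.Partition (j : ℕ) where
  toFun A := ⟨⟨A.1.sum, Nat.lt_succ_of_le A.2.2⟩,
    ⟨A.1, fun hi ↦ Nat.pos_of_ne_zero (ne_of_mem_of_not_mem hi A.2.1), rfl⟩⟩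
  invFun P := ⟨P.2.parts, fun h ↦ (P.2.parts_pos h).false,
    P.2.parts_sum.trans_le (Nat.le_of_lt_succ P.1.2)⟩
  left_inv _ := rfl
  right_inv := by
    rintro ⟨⟨j, hj⟩, ⟨parts, hpos, rfl : parts.sum = j⟩⟩
    rfl

theorem ncard_partitionsLE (M : ℕ) :
    (partitionsLE M).ncard = ∑ j ∈ Finset.range (M + 1), Fintype.card (Nat.Partition j) := by
  rw [← Nat.card_coe_set_eq, Nat.card_congr (partitionsLEEquivSigma M), Nat.card_eq_fintype_card,
    Fintype.card_sigma, Finset.sum_range fun j ↦ Fintype.card (Nat.Partition j)]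

section Words

variable {n p M : ℕ} {A B A' B' : Multiset ℕ}

theorem IsKConvex.comp_rev {k : ℕ} {f : Fin n → Fin p} (hf : IsKConvex k f) :
    IsKConvex k (f ∘ Fin.rev) := by
  intro i j l hij hjl
  have := hf l.rev j.rev i.rev (by grind) (by grind)
  simp only [Function.comp_apply]
  omega

/-- The 0-convex words of length `n` on `p` letters with greatest letter `M`, counting letters
from `0`. -/
def zeroConvexWords (n p M : ℕ) : Set (Fin n → Fin p) :=
  {f | IsKConvex 0 f ∧ (∀ i, (f i : ℕ) ≤ M) ∧ ∃ i, (f i : ℕ) = M}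

theorem exists_excess_eq_deficit {f : Fin n → Fin p} (hf : IsKConvex 0 f)
    (hle : ∀ i, (f i : ℕ) ≤ M) {t : Fin n} (ht : (f t : ℕ) = M) :
    ∃ A ∈ partitionsLE M, ∀ i : Fin n, excess A i = if i ≤ t then M - (f i : ℕ) else 0 := by
  let L (i : ℕ) : ℕ := if h : i ≤ t then M - (f ⟨i, h.trans_lt t.2⟩ : ℕ) else 0
  have hL_of_ge (i : ℕ) (hi : t ≤ i) : L i = 0 := by grind
  have hL_convex (i : ℕ) : 2 * L (i + 1) ≤ L i + L (i + 2) := by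
    rcases le_or_gt (t : ℕ) (i + 1) with hi | hi
    · simp [hL_of_ge _ hi]
    · have hconcave := hf ⟨i, by omega⟩ ⟨i + 1, by omega⟩ ⟨i + 2, by omega⟩ rfl rfl
      have := hle ⟨i, by omega⟩
      have := hle ⟨i + 2, by omega⟩
      simp only [L, dif_pos (show i ≤ t by omega), dif_pos hi.le, dif_pos (show i + 2 ≤ t from hi)]
      omega
  obtain ⟨A, hA, hAL⟩ := exists_excess_eq hL_convex hL_of_ge
  refine ⟨A, ⟨hA, ?_⟩, fun i ↦ by simp [hAL, L]⟩
  rw [← excess_zero_right, hAL]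
  simp [L]

/-- The word with greatest letter `M` whose deficit is `excess A` read from the left end plus
`excess B` read from the right end. -/
def deficitWord (n : ℕ) (hM : M < p) (A B : Multiset ℕ) : Fin n → Fin p := fun i ↦
  ⟨M - (excess A i + excess B i.rev), (Nat.sub_le _ _).trans_lt hM⟩

theorem excess_eq_zero_or_excess_rev_eq_zero (hAB : A.sum + B.sum ≤ n) (i : Fin n) :
    excess A i = 0 ∨ excess B i.rev = 0 := by
  rcases le_or_gt A.sum i with hi | hi
  · exact .inl (excess_eq_zero_of_sum_le hi)
  · exact .inr (excess_eq_zero_of_sum_le (by grind))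

theorem deficitWord_add_excess (hM : M < p) (hA : A.sum ≤ M) (hB : B.sum ≤ M)
    (hAB : A.sum + B.sum ≤ n) (i : Fin n) :
    (deficitWord n hM A B i : ℕ) + (excess A i + excess B i.rev) = M := by
  refine Nat.sub_add_cancel ?_
  rcases excess_eq_zero_or_excess_rev_eq_zero hAB i with h | h
  · rw [h, zero_add]
    exact (excess_le_sum B i.rev).trans hB
  · rw [h, add_zero]
    exact (excess_le_sum A i).trans hA

theorem isKConvex_zero_deficitWord (hM : M < p) (hA : A.sum ≤ M) (hB : B.sum ≤ M)
    (hAB : A.sum + B.sum ≤ n) : IsKConvex 0 (deficitWord n hM A B) := by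
  intro i j l hij hjl
  have hl_eq : (l : ℕ) = i + 2 := by omega
  have hrev_j : (j.rev : ℕ) = l.rev + 1 := by grind
  have hrev_i : (i.rev : ℕ) = l.rev + 2 := by grind
  have hi := deficitWord_add_excess hM hA hB hAB i
  have hj := deficitWord_add_excess hM hA hB hAB j
  have hl := deficitWord_add_excess hM hA hB hAB l
  have hconvexA := two_mul_excess_succ_le A i
  have hconvexB := two_mul_excess_succ_le B l.rev
  rw [hrev_i] at hi
  rw [hrev_j, ← hij] at hj
  rw [hl_eq] at hl
  push_cast
  omega

theorem deficitWord_mem_zeroConvexWords (hM : M < p) (hA : A.sum ≤ M) (hB : B.sum ≤ M)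
    (hAB : A.sum + B.sum < n) : deficitWord n hM A B ∈ zeroConvexWords n p M := by
  refine ⟨isKConvex_zero_deficitWord hM hA hB hAB.le, fun _ ↦ Nat.sub_le _ _,
    ⟨A.sum, by omega⟩, ?_⟩
  have hzeroA : excess A A.sum = 0 := excess_eq_zero_of_sum_le le_rfl
  have hzeroB : excess B (Fin.rev (⟨A.sum, by omega⟩ : Fin n)) = 0 :=
    excess_eq_zero_of_sum_le (by grind)
  simp only [deficitWord, hzeroA, hzeroB, add_zero, Nat.sub_zero]

theorem excess_eq_of_add_excess_rev_eq (hn : 2 * M ≤ n) (hA : A.sum ≤ M) (hB : B.sum ≤ M)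
    (hA' : A'.sum ≤ M) (hB' : B'.sum ≤ M)
    (h : ∀ i : Fin n, excess A i + excess B i.rev = excess A' i + excess B' i.rev) :
    excess A = excess A' := by
  ext i
  rcases le_or_gt M i with hi | hi
  · rw [excess_eq_zero_of_sum_le (hA.trans hi), excess_eq_zero_of_sum_le (hA'.trans hi)]
  · let j : Fin n := ⟨i, by omega⟩
    have hj : M ≤ j.rev := by grind
    have hij := h j
    rwa [excess_eq_zero_of_sum_le (hB.trans hj), excess_eq_zero_of_sum_le (hB'.trans hj)] at hij

theorem injOn_deficitWord (hM : M < p) (hn : 2 * M ≤ n) :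
    (partitionsLE M ×ˢ partitionsLE M).InjOn fun P ↦ deficitWord n hM P.1 P.2 := by
  rintro ⟨A, B⟩ ⟨⟨hA₀, hA⟩, hB₀, hB⟩ ⟨A', B'⟩ ⟨⟨hA'₀, hA'⟩, hB'₀, hB'⟩
    (hwords : deficitWord n hM A B = deficitWord n hM A' B')
  have hdeficit (i : Fin n) : excess A i + excess B i.rev = excess A' i + excess B' i.rev := by
    have hleft := deficitWord_add_excess hM hA hB (by omega) i
    have hright := deficitWord_add_excess hM hA' hB' (by omega) i
    rw [← hwords] at hright
    exact Nat.add_left_cancel (hleft.trans hright.symm)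
  have hdeficit_rev (i : Fin n) :
      excess B i + excess A i.rev = excess B' i + excess A' i.rev := by
    simpa [add_comm] using hdeficit i.rev
  exact Prod.ext
    (eq_of_excess_eq hA₀ hA'₀ (excess_eq_of_add_excess_rev_eq hn hA hB hA' hB' hdeficit))
    (eq_of_excess_eq hB₀ hB'₀ (excess_eq_of_add_excess_rev_eq hn hB hA hB' hA' hdeficit_rev))

theorem surjOn_deficitWord (hM : M < p) :
    Set.SurjOn (fun P ↦ deficitWord n hM P.1 P.2) (partitionsLE M ×ˢ partitionsLE M)
      (zeroConvexWords n p M) := by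
  rintro f ⟨hf, hle, t, ht⟩
  obtain ⟨A, hA, hAf⟩ := exists_excess_eq_deficit hf hle ht
  obtain ⟨B, hB, hBf⟩ := exists_excess_eq_deficit (t := t.rev) hf.comp_rev
    (fun i ↦ hle i.rev) (by simpa using ht)
  refine ⟨(A, B), ⟨hA, hB⟩, funext fun i ↦ Fin.ext ?_⟩
  simp only [deficitWord, hAf, hBf, Function.comp_apply, Fin.rev_rev, Fin.rev_le_rev]
  rcases lt_trichotomy i t with hi | rfl | hi
  · simp [hi.le, hi.not_ge, Nat.sub_sub_self (hle i)]
  · simp [ht]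
  · simp [hi.le, hi.not_ge, Nat.sub_sub_self (hle i)]

theorem bijOn_deficitWord (hM : M < p) (hn : 2 * M < n) :
    Set.BijOn (fun P ↦ deficitWord n hM P.1 P.2) (partitionsLE M ×ˢ partitionsLE M)
      (zeroConvexWords n p M) :=
  ⟨fun _ ⟨⟨_, hA⟩, _, hB⟩ ↦ deficitWord_mem_zeroConvexWords hM hA hB (by omega),
    injOn_deficitWord hM hn.le, surjOn_deficitWord hM⟩

end Words

theorem ncard_zeroConvexWords {n p M : ℕ} (hM : M < p) (hn : 2 * M < n) :
    (zeroConvexWords n p M).ncard =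
      (∑ j ∈ Finset.range (M + 1), Fintype.card (Nat.Partition j)) ^ 2 := by
  rw [← (bijOn_deficitWord hM hn).ncard_eq, Set.ncard_prod, ncard_partitionsLE, sq]

theorem zero_convex_words_max_count_general (p m n : ℕ) (hmp : m ≤ p) (hn : 2 * m ≤ n + 1) :
    Nat.card {f : Fin n → Fin p // IsKConvex 0 f ∧
        (∀ i : Fin n, (f i : ℕ) + 1 ≤ m) ∧ (∃ i : Fin n, (f i : ℕ) + 1 = m)}
      = (∑ j ∈ Finset.range m, Fintype.card (Nat.Partition j)) ^ 2 := by
  cases m with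
  | zero => simp
  | succ M =>
    simp only [Nat.add_le_add_iff_right, Nat.add_right_cancel_iff]
    exact ncard_zeroConvexWords hmp (by omega)

/-- for `1 ≤ m ≤ p` and `n ≥ 2p - 1`, the number of 0-convex words of
length `n` on `[p]` whose maximum value is exactly `m` equals
`(Σ_{j=0}^{m-1} a(j))²`, where `a(j)` is the number of integer partitions of `j`. -/
theorem zero_convex_words_max_count (p m n : ℕ) (hp : 1 ≤ p) (hm1 : 1 ≤ m)
    (hmp : m ≤ p) (hn : 2 * p - 1 ≤ n) :
    Nat.card {f : Fin n → Fin p // IsKConvex 0 f ∧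
        (∀ i : Fin n, (f i : ℕ) + 1 ≤ m) ∧ (∃ i : Fin n, (f i : ℕ) + 1 = m)}
      = (∑ j ∈ Finset.range m, Fintype.card (Nat.Partition j)) ^ 2 :=
  zero_convex_words_max_count_general p m n hmp (by omega)
end

section
/- Let k ∈ {0, 1, 2} and let π be a k-convex permutation of [n] with n ≥ 2. If π(2) − 2π(1) ≤ k, then L(π) is a k-convex permutation of [n+1]; if π(n−1) − 2π(n) ≤ k, then R(π) is a k-convex permutation of [n+1]. Moreover, if k ∈ {1, 2}, then at least one of L(π) and R(π) is k-convex. -/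
/-- The left descendant `L(π)`: `L(π)(1) = 1` and `L(π)(i) = π(i-1) + 1` for
`2 ≤ i ≤ n+1` (0-indexed via `Fin.cons`). -/
def Lf {n : ℕ} (f : Fin n → Fin n) : Fin (n + 1) → Fin (n + 1) :=
  Fin.cons 0 (fun i => (f i).succ)

/-- The right descendant `R(π)`: `R(π)(i) = π(i) + 1` for `1 ≤ i ≤ n` and
`R(π)(n+1) = 1` (0-indexed via `Fin.snoc`). -/
def Rf {n : ℕ} (f : Fin n → Fin n) : Fin (n + 1) → Fin (n + 1) :=
  Fin.snoc (fun i => (f i).succ) 0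

/-!
`L(π)` has a single new convexity condition, the one at its second entry, and it is exactly
`π(2) - 2π(1) ≤ k`; reversing the word turns this into the assertion on `R(π)`.

When `k ≤ 2` an interior entry of `π` cannot be smaller than both of its neighbours, because these
are distinct and so exceed it by at least `1 + 2` in total. Going downhill from an interior entry
therefore ends next to an end of the word, so every interior entry is at least
`min (π(2)) (π(n-1))`. If both boundary conditions fail and `k ≥ 1`, that minimum is at least `4`,
which leaves only the two end positions for the values `1`, `2` and `3` (`0`, `1` and `2` in the
0-indexed encoding).
-/

theorem lf_injective {n : ℕ} {f : Fin n → Fin n} (hf : Function.Injective f) :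
    Function.Injective (Lf f) := by
  refine Fin.cons_injective_iff.2 ⟨?_, (Fin.succ_injective n).comp hf⟩
  rintro ⟨i, hi⟩
  exact Fin.succ_ne_zero _ hi

theorem rf_eq_lf_comp_rev {n : ℕ} (f : Fin n → Fin n) :
    Rf f = Lf (f ∘ Fin.rev) ∘ Fin.rev := by
  funext i
  cases i using Fin.lastCases with
  | last => simp [Rf, Lf]
  | cast i => simp [Rf, Lf, Fin.rev_castSucc]

theorem rf_injective {n : ℕ} {f : Fin n → Fin n} (hf : Function.Injective f) :
    Function.Injective (Rf f) := by
  rw [rf_eq_lf_comp_rev]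
  exact (lf_injective (hf.comp Fin.rev_injective)).comp Fin.rev_injective

namespace IsKConvex

theorem comp_rev_s14 {k n p : ℕ} {f : Fin n → Fin p} (hf : IsKConvex k f) :
    IsKConvex k (f ∘ Fin.rev) := by
  intro i j l hij hjl
  have hconv := hf l.rev j.rev i.rev (by grind) (by grind)
  simp only [Function.comp_apply]
  linarith

theorem lf {k n : ℕ} {f : Fin n → Fin n} (hf : IsKConvex k f) (hn : 1 < n)
    (h : ((f ⟨1, by omega⟩ : ℕ) : ℤ) + 1 - 2 * (((f ⟨0, by omega⟩ : ℕ) : ℤ) + 1) ≤ k) :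
    IsKConvex k (Lf f) := by
  intro i j l hij hjl
  obtain ⟨j, rfl⟩ := Fin.exists_succ_eq.2 (show j ≠ 0 by rintro rfl; simp at hij)
  obtain ⟨l, rfl⟩ := Fin.exists_succ_eq.2 (show l ≠ 0 by rintro rfl; simp at hjl)
  simp only [Fin.val_succ, Nat.add_right_cancel_iff] at hij hjl
  cases i using Fin.cases with
  | zero =>
    rw [Fin.val_zero] at hij
    have hj : j = ⟨0, by omega⟩ := Fin.ext hij.symm
    have hl : l = ⟨1, by omega⟩ := Fin.ext (by simp [← hjl, ← hij])
    rw [← hj, ← hl] at h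
    simp only [Lf, Fin.cons_zero, Fin.cons_succ, Fin.val_succ, Fin.val_zero]
    omega
  | succ i =>
    have hconv := hf i j l hij hjl
    simp only [Lf, Fin.cons_succ, Fin.val_succ]
    omega

theorem rf {k n : ℕ} {f : Fin n → Fin n} (hf : IsKConvex k f) (hn : 1 < n)
    (h : ((f ⟨n - 2, by omega⟩ : ℕ) : ℤ) + 1 - 2 * (((f ⟨n - 1, by omega⟩ : ℕ) : ℤ) + 1) ≤ k) :
    IsKConvex k (Rf f) := by
  rw [rf_eq_lf_comp_rev]
  exact (hf.comp_rev_s14.lf hn h).comp_rev_s14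

theorem exists_neighbor_lt {k n p : ℕ} {f : Fin n → Fin p} (hf : IsKConvex k f) (hk : k ≤ 2)
    (hinj : Function.Injective f) {i j l : Fin n} (hij : (i : ℕ) + 1 = j)
    (hjl : (j : ℕ) + 1 = l) : f i < f j ∨ f l < f j := by
  by_contra! hmin
  have hi : f j < f i := hmin.1.lt_of_ne (hinj.ne (by omega))
  have hl : f j < f l := hmin.2.lt_of_ne (hinj.ne (by omega))
  have hil : f i ≠ f l := hinj.ne (by omega)
  have hsum : 2 * (f j : ℕ) + 3 ≤ f i + f l := by omega
  have hconv := hf i j l hij hjl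
  omega

theorem le_apply_of_interior {k n p : ℕ} {f : Fin n → Fin p} (hf : IsKConvex k f) (hk : k ≤ 2)
    (hinj : Function.Injective f) (hn : 1 < n) {b : Fin p}
    (hleft : b ≤ f ⟨1, by omega⟩) (hright : b ≤ f ⟨n - 2, by omega⟩)
    (j : Fin n) (hj : 0 < (j : ℕ)) (hj' : (j : ℕ) < n - 1) : b ≤ f j := by
  induction hv : f j using WellFoundedLT.induction generalizing j with
  | ind v ih =>
    subst hv
    rcases hf.exists_neighbor_lt hk hinj (i := ⟨j - 1, by omega⟩) (j := j)
        (l := ⟨j + 1, by omega⟩) (Nat.sub_add_cancel hj) rfl with hlt | hlt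
    · rcases Nat.eq_or_lt_of_le hj with hfirst | hj1
      · rwa [show j = ⟨1, by omega⟩ from Fin.ext hfirst.symm]
      · exact (ih _ hlt _ (Nat.sub_pos_of_lt hj1) (by grind) rfl).trans hlt.le
    · by_cases hlast : (j : ℕ) = n - 2
      · rwa [show j = ⟨n - 2, by omega⟩ from Fin.ext hlast]
      · exact (ih _ hlt _ (Nat.succ_pos _) (by grind) rfl).trans hlt.le

end IsKConvex

theorem exists_interior_lt_three {n : ℕ} (hn : 3 ≤ n) (π : Equiv.Perm (Fin n)) :
    ∃ j : Fin n, 0 < (j : ℕ) ∧ (j : ℕ) < n - 1 ∧ (π j : ℕ) < 3 := by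
  let ends : Finset (Fin n) := {⟨0, by omega⟩, ⟨n - 1, by omega⟩}
  let small : Finset (Fin n) := Finset.univ.map ((Fin.castLEEmb hn).trans π.symm.toEmbedding)
  have hcard : ends.card < small.card := by
    simpa [small] using Finset.card_le_two.trans_lt (by norm_num : 2 < 3)
  obtain ⟨j, hsmall, hends⟩ := Finset.exists_mem_notMem_of_card_lt_card hcard
  obtain ⟨v, -, hv⟩ := Finset.mem_map.1 hsmall
  simp only [ends, Finset.mem_insert, Finset.mem_singleton, Fin.ext_iff] at hends
  exact ⟨j, by omega, by omega, by simp [← hv]⟩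

theorem IsKConvex.left_or_right_boundary_le {k n : ℕ} {π : Equiv.Perm (Fin n)}
    (hπ : IsKConvex k π) (hk : k = 1 ∨ k = 2) (hn : 1 < n) :
    ((π ⟨1, by omega⟩ : ℕ) : ℤ) + 1 - 2 * (((π ⟨0, by omega⟩ : ℕ) : ℤ) + 1) ≤ k ∨
      ((π ⟨n - 2, by omega⟩ : ℕ) : ℤ) + 1 - 2 * (((π ⟨n - 1, by omega⟩ : ℕ) : ℤ) + 1) ≤ k := by
  by_contra! h
  have hleft : 3 ≤ (π ⟨1, by omega⟩ : ℕ) := by omega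
  have hright : 3 ≤ (π ⟨n - 2, by omega⟩ : ℕ) := by omega
  have hn3 : 3 < n := hleft.trans_lt (π _).isLt
  obtain ⟨j, hj, hj', hlt⟩ := exists_interior_lt_three hn3.le π
  have hge : ⟨3, hn3⟩ ≤ π j :=
    hπ.le_apply_of_interior (by omega) π.injective hn hleft hright j hj hj'
  exact absurd hlt (Nat.not_lt.2 hge)

theorem descend_kconvex_general (k n : ℕ) (hn : 1 < n)
    (π : Equiv.Perm (Fin n)) (hπ : IsKConvex k ⇑π) :
    ((((π ⟨1, by omega⟩ : ℕ) : ℤ) + 1) - 2 * (((π ⟨0, by omega⟩ : ℕ) : ℤ) + 1) ≤ (k : ℤ) →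
      IsKConvex k (Lf ⇑π) ∧ Function.Bijective (Lf ⇑π)) ∧
    ((((π ⟨n - 2, by omega⟩ : ℕ) : ℤ) + 1) - 2 * (((π ⟨n - 1, by omega⟩ : ℕ) : ℤ) + 1) ≤ (k : ℤ) →
      IsKConvex k (Rf ⇑π) ∧ Function.Bijective (Rf ⇑π)) ∧
    (k = 1 ∨ k = 2 → IsKConvex k (Lf ⇑π) ∨ IsKConvex k (Rf ⇑π)) :=
  ⟨fun h => ⟨hπ.lf hn h, Finite.injective_iff_bijective.1 (lf_injective π.injective)⟩,
    fun h => ⟨hπ.rf hn h, Finite.injective_iff_bijective.1 (rf_injective π.injective)⟩,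
    fun hk => (hπ.left_or_right_boundary_le hk hn).imp (hπ.lf hn) (hπ.rf hn)⟩

/-- for `k ∈ {0,1,2}` and a `k`-convex permutation `π` of `[n]`,
`n ≥ 2`: if `π(2) - 2π(1) ≤ k` then `L(π)` is a `k`-convex permutation of `[n+1]`;
if `π(n-1) - 2π(n) ≤ k` then `R(π)` is a `k`-convex permutation of `[n+1]`;
and if `k ∈ {1,2}` then at least one of `L(π)`, `R(π)` is `k`-convex.
(1-indexed values: `π(i) = (π' ⟨i-1,_⟩ : ℕ) + 1` for the 0-indexed model `π'`.) -/
theorem descend_kconvex (k n : ℕ) (hk : k ≤ 2) (hn : 2 ≤ n)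
    (π : Equiv.Perm (Fin n)) (hπ : IsKConvex k ⇑π) :
    ((((π ⟨1, by omega⟩ : ℕ) : ℤ) + 1) - 2 * (((π ⟨0, by omega⟩ : ℕ) : ℤ) + 1) ≤ (k : ℤ) →
      IsKConvex k (Lf ⇑π) ∧ Function.Bijective (Lf ⇑π)) ∧
    ((((π ⟨n - 2, by omega⟩ : ℕ) : ℤ) + 1) - 2 * (((π ⟨n - 1, by omega⟩ : ℕ) : ℤ) + 1) ≤ (k : ℤ) →
      IsKConvex k (Rf ⇑π) ∧ Function.Bijective (Rf ⇑π)) ∧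
    (k = 1 ∨ k = 2 → IsKConvex k (Lf ⇑π) ∨ IsKConvex k (Rf ⇑π)) :=
  descend_kconvex_general k n hn π hπ
end
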